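/- arXiv:1802.08309 — 2 statements merged into one kernel-verified Lean document; each statement's English description precedes it below -/
import Mathlib

section
/- Let ℬ ⊆ ℕ = {1,2,…} be a primitive set and for N ∈ ℕ let ℬ̃^(N) := {b ∈ ℬ : b has no prime factor ≤ N}. Then ℬ is not Behrend if and only if lim_{N→∞} δ(M_{ℬ̃^(N)}) = 0. -/
open Filter Set Topology MeasureTheory

open scoped Classical

noncomputable section

/-- The set of multiples `M_B ⊆ ℤ` of a set `B ⊆ ℕ`. -/
def multiplesZ (B : Set ℕ) : Set ℤ := {n : ℤ | ∃ b ∈ B, (b : ℤ) ∣ n}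

/-- The `B`-free integers `F_B = ℤ ∖ M_B`. -/
def freeZ (B : Set ℕ) : Set ℤ := (multiplesZ B)ᶜ

/-- The logarithmically weighted averages `(1/log n) ∑_{k=1}^n 1_A(k)/k`. -/
def logWeight (A : Set ℤ) (n : ℕ) : ℝ :=
  (Real.log n)⁻¹ * ∑ k ∈ Finset.Icc 1 n, A.indicator (fun m : ℤ => ((m : ℝ))⁻¹) (k : ℤ)

/-- The lower logarithmic density of a set `A ⊆ ℤ`. -/
def logDensLow (A : Set ℤ) : ℝ := liminf (logWeight A) atTop

/-- `A ⊆ ℤ` has logarithmic density `d`. -/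
def HasLogDensity (A : Set ℤ) (d : ℝ) : Prop := Tendsto (logWeight A) atTop (𝓝 d)

/-- `B` is primitive: no element divides another one. -/
def Primitive (B : Set ℕ) : Prop := ∀ b ∈ B, ∀ b' ∈ B, b ∣ b' → b = b'

/-- `B` is Behrend: its set of multiples has logarithmic density one. -/
def IsBehrend (B : Set ℕ) : Prop := logDensLow (multiplesZ B) = 1

/-- `B` is taut: removing any element strictly decreases the logarithmic density
of the set of multiples. -/
def IsTaut (B : Set ℕ) : Prop :=
  ∀ b ∈ B, logDensLow (multiplesZ (B \ {b})) < logDensLow (multiplesZ B)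

/-- `B̃^(N)`: the elements of `B` having no prime factor `≤ N`. -/
def Btilde (B : Set ℕ) (N : ℕ) : Set ℕ := {b ∈ B | ∀ p : ℕ, p.Prime → p ∣ b → N < p}

/-- `B^(N)`: the elements of `B` all of whose prime factors are `≤ N`. -/
def Bsmooth (B : Set ℕ) (N : ℕ) : Set ℕ := {b ∈ B | ∀ p : ℕ, p.Prime → p ∣ b → p ≤ N}

/-!
Let `P_s` be the zeta distribution, giving `n` the mass `n⁻ˢ / ζ(s)`. A form of the Davenport–Erdős
theorem says `δ(M_B) = lim_{s → 1+} P_s(M_B)`. Here `δ(A) ≤ liminf P_s(A)` holds for every `A`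
by Abel summation. Conversely, `ζ(w + 1) / ζ(w + s)` has nonnegative coefficients when `1 < s`,
and convolving them with `n⁻ˢ` restricted to `M_B` stays below `n⁻¹` restricted to `M_B`; summing
over `n ≤ x` gives `P_s(M_B) ≤ δ(M_B)`. This inequality also makes `δ(M_B)` continuous along
increasing unions of `B`.

Under `P_s` the exponents of different primes are independent, so if every element of `C` is coprime
to every element of `D`, then `1 - δ(M_{C ∪ D}) = (1 - δ(M_C)) (1 - δ(M_D))`. With `C = B^(N)` and
`D = B̃^(N)`, as `1 - δ(M_{B^(N)}) → 1 - δ(M_B)`, the second factor tends to `1` unless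
`δ(M_B) = 1`. With `C` the set of primes `≤ N`, for which `δ(M_C) < 1`, and `D = B̃^(N)`, the
Behrend property passes from `B` to every `B̃^(N)`.
-/

section DirichletSums

/-- The coefficients `n⁻ˢ` of the Dirichlet series of a set `T ⊆ ℕ`; the coefficient at `0` is `0`
whether or not `0 ∈ T`. -/
def dirichletTerm (T : Set ℕ) (s : ℝ) : ArithmeticFunction ℝ :=
  ⟨fun n => if n ≠ 0 ∧ n ∈ T then (n : ℝ) ^ (-s) else 0, by simp⟩

/-- The partial sum `∑_{1 ≤ n ≤ x, n ∈ T} n⁻ˢ` of the Dirichlet series of `T`. -/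
def partialDirichletSum (T : Set ℕ) (s : ℝ) (x : ℕ) : ℝ :=
  ∑ n ∈ Finset.Ioc 0 x, dirichletTerm T s n

/-- The Dirichlet series `∑_{n ∈ T} n⁻ˢ` of `T`, meaningful for `1 < s`; it is `ζ(s)` for
`T = univ`. -/
def dirichletSum (T : Set ℕ) (s : ℝ) : ℝ := ∑' n, dirichletTerm T s n

/-- The probability of `T` under the zeta distribution with parameter `s`, which gives `n` the mass
`n⁻ˢ / ζ(s)`. -/
def zetaDensity (T : Set ℕ) (s : ℝ) : ℝ := dirichletSum T s / dirichletSum univ s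

variable {T T' : Set ℕ} {s : ℝ}

theorem dirichletTerm_apply (T : Set ℕ) (s : ℝ) (n : ℕ) :
    dirichletTerm T s n = if n ≠ 0 ∧ n ∈ T then (n : ℝ) ^ (-s) else 0 := rfl

theorem dirichletTerm_nonneg (T : Set ℕ) (s : ℝ) (n : ℕ) : 0 ≤ dirichletTerm T s n := by
  rw [dirichletTerm_apply]
  positivity

theorem dirichletTerm_mono (h : ∀ n ≠ 0, n ∈ T → n ∈ T') (s : ℝ) (n : ℕ) :
    dirichletTerm T s n ≤ dirichletTerm T' s n := by
  by_cases hn : n ≠ 0 ∧ n ∈ T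
  · simp [dirichletTerm_apply, hn.1, hn.2, h n hn.1 hn.2]
  · rw [dirichletTerm_apply T, if_neg hn]
    exact dirichletTerm_nonneg T' s n

theorem dirichletTerm_le_univ (T : Set ℕ) (s : ℝ) (n : ℕ) :
    dirichletTerm T s n ≤ dirichletTerm univ s n :=
  dirichletTerm_mono (fun n _ _ => mem_univ n) s n

theorem dirichletTerm_add_compl (T : Set ℕ) (s : ℝ) (n : ℕ) :
    dirichletTerm T s n + dirichletTerm Tᶜ s n = dirichletTerm univ s n := by
  by_cases hn : n = 0 <;> by_cases hT : n ∈ T <;> simp [dirichletTerm_apply, hn, hT]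

theorem dirichletTerm_mul {U V : Set ℕ} {m n : ℕ} (h : m * n ∈ T ↔ m ∈ U ∧ n ∈ V) (s : ℝ) :
    dirichletTerm T s (m * n) = dirichletTerm U s m * dirichletTerm V s n := by
  by_cases hU : m ∈ U <;> by_cases hV : n ∈ V <;> by_cases hm : m = 0 <;> by_cases hn : n = 0 <;>
    simp [dirichletTerm_apply, h, hU, hV, hm, hn, Real.mul_rpow]

theorem dirichletTerm_mul_rpow (T : Set ℕ) (r s : ℝ) (n : ℕ) :
    dirichletTerm T r n * (n : ℝ) ^ (r - s) = dirichletTerm T s n := by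
  by_cases hn : n ≠ 0 ∧ n ∈ T
  · have hpos : (0 : ℝ) < n := by exact_mod_cast Nat.pos_of_ne_zero hn.1
    rw [dirichletTerm_apply, dirichletTerm_apply, if_pos hn, if_pos hn, ← Real.rpow_add hpos]
    ring_nf
  · simp only [dirichletTerm_apply, if_neg hn, zero_mul]

theorem isMultiplicative_dirichletTerm_univ (s : ℝ) : (dirichletTerm univ s).IsMultiplicative :=
  ⟨by simp [dirichletTerm_apply], fun _ => dirichletTerm_mul (by simp) s⟩

theorem dirichletTerm_univ_prime_pow {p : ℕ} (hp : p.Prime) (s : ℝ) (k : ℕ) :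
    dirichletTerm univ s (p ^ k) = ((p : ℝ) ^ (-s)) ^ k := by
  rw [dirichletTerm_apply, if_pos ⟨pow_ne_zero k hp.ne_zero, mem_univ _⟩, Nat.cast_pow,
    ← Real.rpow_natCast_mul p.cast_nonneg, mul_comm, Real.rpow_mul_natCast p.cast_nonneg]

theorem partialDirichletSum_nonneg (T : Set ℕ) (s : ℝ) (x : ℕ) : 0 ≤ partialDirichletSum T s x :=
  Finset.sum_nonneg fun n _ => dirichletTerm_nonneg T s n

theorem partialDirichletSum_mono (h : T ⊆ T') (s : ℝ) (x : ℕ) :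
    partialDirichletSum T s x ≤ partialDirichletSum T' s x :=
  Finset.sum_le_sum fun n _ => dirichletTerm_mono (fun _ _ hn => h hn) s n

theorem partialDirichletSum_univ_one (x : ℕ) :
    partialDirichletSum univ 1 x = (harmonic x : ℝ) := by
  rw [harmonic_eq_sum_Icc, partialDirichletSum, Rat.cast_sum]
  refine Finset.sum_congr rfl fun n hn => ?_
  simp [dirichletTerm_apply, (Finset.mem_Ioc.mp hn).1.ne', Real.rpow_neg_one]

theorem summable_dirichletTerm (T : Set ℕ) (hs : 1 < s) :
    Summable fun n => dirichletTerm T s n := by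
  refine .of_nonneg_of_le (dirichletTerm_nonneg T s) (fun n => ?_)
    (Real.summable_nat_rpow.mpr (neg_lt_neg hs))
  rw [dirichletTerm_apply]
  split_ifs
  · exact le_rfl
  · positivity

theorem dirichletSum_nonneg (T : Set ℕ) (s : ℝ) : 0 ≤ dirichletSum T s :=
  tsum_nonneg (dirichletTerm_nonneg T s)

theorem dirichletSum_mono (h : ∀ n ≠ 0, n ∈ T → n ∈ T') (hs : 1 < s) :
    dirichletSum T s ≤ dirichletSum T' s :=
  (summable_dirichletTerm T hs).tsum_le_tsum (dirichletTerm_mono h s) (summable_dirichletTerm T' hs)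

theorem dirichletSum_univ_pos (hs : 1 < s) : 0 < dirichletSum univ s :=
  (summable_dirichletTerm univ hs).tsum_pos (dirichletTerm_nonneg univ s) 1
    (by simp [dirichletTerm_apply])

theorem partialDirichletSum_le_dirichletSum (T : Set ℕ) (hs : 1 < s) (x : ℕ) :
    partialDirichletSum T s x ≤ dirichletSum T s :=
  (summable_dirichletTerm T hs).sum_le_tsum _ fun n _ => dirichletTerm_nonneg T s n

theorem tendsto_partialDirichletSum (T : Set ℕ) (hs : 1 < s) :
    Tendsto (partialDirichletSum T s) atTop (𝓝 (dirichletSum T s)) := by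
  refine ((summable_dirichletTerm T hs).hasSum.tendsto_sum_nat.comp
    (tendsto_add_atTop_nat 1)).congr fun x => ?_
  rw [Function.comp, Finset.sum_range_succ', ArithmeticFunction.map_zero, add_zero,
    partialDirichletSum, Finset.range_eq_Ico, Finset.sum_Ico_add',
    Finset.Ico_add_one_add_one_eq_Ioc]

theorem zetaDensity_mono (h : ∀ n ≠ 0, n ∈ T → n ∈ T') (hs : 1 < s) :
    zetaDensity T s ≤ zetaDensity T' s :=
  div_le_div_of_nonneg_right (dirichletSum_mono h hs) (dirichletSum_univ_pos hs).le

theorem zetaDensity_compl (T : Set ℕ) (hs : 1 < s) :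
    zetaDensity Tᶜ s = 1 - zetaDensity T s := by
  have hsum : dirichletSum T s + dirichletSum Tᶜ s = dirichletSum univ s := by
    simp_rw [dirichletSum, ← dirichletTerm_add_compl T s]
    exact ((summable_dirichletTerm T hs).tsum_add (summable_dirichletTerm Tᶜ hs)).symm
  have hpos := dirichletSum_univ_pos hs
  rw [zetaDensity, zetaDensity, eq_sub_iff_add_eq', ← add_div, hsum, div_self hpos.ne']

theorem tendsto_inv_dirichletSum_univ :
    Tendsto (fun s => (dirichletSum univ s)⁻¹) (𝓝[>] 1) (𝓝 0) := by
  have hnum : Tendsto (fun s : ℝ => s - 1) (𝓝[>] 1) (𝓝 0) :=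
    tendsto_nhdsWithin_of_tendsto_nhds (Continuous.tendsto' (by fun_prop) _ _ (sub_self 1))
  have hdiv := hnum.div tendsto_sub_mul_tsum_nat_rpow one_ne_zero
  rw [zero_div] at hdiv
  refine hdiv.congr' ?_
  filter_upwards [self_mem_nhdsWithin] with s hs
  have hzeta : dirichletSum univ s = ∑' n : ℕ, 1 / (n : ℝ) ^ s := by
    refine tsum_congr fun n => ?_
    rcases eq_or_ne n 0 with rfl | hn
    · simp [Real.zero_rpow (zero_lt_one.trans hs).ne']
    · simp [dirichletTerm_apply, hn, Real.rpow_neg]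
  simp only [Pi.div_apply, ← hzeta]
  rw [← div_div, div_self (sub_pos.mpr hs).ne', one_div]

end DirichletSums

section ZetaRatio

variable {r s : ℝ}

/-- The coefficients of the Dirichlet series `w ↦ ζ(w + r) / ζ(w + s)`. -/
def zetaRatio (r s : ℝ) : ArithmeticFunction ℝ :=
  (ArithmeticFunction.prodPrimeFactors fun p => 1 - (p : ℝ) ^ (r - s)).pmul (dirichletTerm univ r)

theorem zetaRatio_nonneg (hrs : r ≤ s) (n : ℕ) : 0 ≤ zetaRatio r s n := by
  rcases eq_or_ne n 0 with rfl | hn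
  · simp
  rw [zetaRatio, ArithmeticFunction.pmul_apply, ArithmeticFunction.prodPrimeFactors_apply hn]
  refine mul_nonneg (Finset.prod_nonneg fun p hp => sub_nonneg.mpr ?_) (dirichletTerm_nonneg _ _ _)
  have hp1 : (1 : ℝ) ≤ p := by exact_mod_cast (Nat.prime_of_mem_primeFactors hp).one_le
  exact Real.rpow_le_one_of_one_le_of_nonpos hp1 (sub_nonpos.mpr hrs)

theorem isMultiplicative_zetaRatio (r s : ℝ) : (zetaRatio r s).IsMultiplicative :=
  (ArithmeticFunction.IsMultiplicative.prodPrimeFactors _).pmul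
    (isMultiplicative_dirichletTerm_univ r)

theorem zetaRatio_prime_pow {p k : ℕ} (hp : p.Prime) (hk : k ≠ 0) (r s : ℝ) :
    zetaRatio r s (p ^ k) = ((p : ℝ) ^ (-r) - (p : ℝ) ^ (-s)) * ((p : ℝ) ^ (-r)) ^ (k - 1) := by
  have hp0 : (0 : ℝ) < p := by exact_mod_cast hp.pos
  have hratio : (p : ℝ) ^ (r - s) * (p : ℝ) ^ (-r) = (p : ℝ) ^ (-s) := by
    rw [← Real.rpow_add hp0]
    ring_nf
  rw [zetaRatio, ArithmeticFunction.pmul_apply, dirichletTerm_univ_prime_pow hp,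
    ArithmeticFunction.prodPrimeFactors_apply (pow_ne_zero k hp.ne_zero),
    Nat.primeFactors_prime_pow hk hp, Finset.prod_singleton, ← mul_pow_sub_one hk, ← hratio]
  ring

theorem zetaRatio_mul_dirichletTerm_univ (r s : ℝ) :
    zetaRatio r s * dirichletTerm univ s = dirichletTerm univ r := by
  rw [ArithmeticFunction.IsMultiplicative.eq_iff_eq_on_prime_powers _
    ((isMultiplicative_zetaRatio r s).mul (isMultiplicative_dirichletTerm_univ s)) _
    (isMultiplicative_dirichletTerm_univ r)]
  intro p k hp
  set a : ℝ := (p : ℝ) ^ (-r)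
  set b : ℝ := (p : ℝ) ^ (-s)
  rw [ArithmeticFunction.mul_apply,
    Nat.sum_divisorsAntidiagonal' (f := fun d e => zetaRatio r s d * dirichletTerm univ s e),
    Nat.sum_divisors_prime_pow hp, dirichletTerm_univ_prime_pow hp, Finset.sum_range_succ]
  have hterm : ∀ i ∈ Finset.range k, zetaRatio r s (p ^ k / p ^ i) * dirichletTerm univ s (p ^ i)
      = b ^ i * a ^ (k - 1 - i) * (a - b) := by
    intro i hi
    have hik := Finset.mem_range.mp hi
    rw [Nat.pow_div hik.le hp.pos, zetaRatio_prime_pow hp (Nat.sub_ne_zero_of_lt hik),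
      dirichletTerm_univ_prime_pow hp, Nat.sub_right_comm]
    ring
  rw [Finset.sum_congr rfl hterm, ← Finset.sum_mul, Nat.div_self (pow_pos hp.pos k),
    (isMultiplicative_zetaRatio r s).map_one, dirichletTerm_univ_prime_pow hp]
  linear_combination -geom_sum₂_mul b a k

end ZetaRatio

section Convolution

variable {R : Type*} [Semiring R] [PartialOrder R] [IsOrderedRing R] {f g : ArithmeticFunction R}

theorem sum_Ioc_mul_le_mul_sum (hf : ∀ n, 0 ≤ f n) (hg : ∀ n, 0 ≤ g n) (x : ℕ) :
    ∑ n ∈ Finset.Ioc 0 x, (f * g) n ≤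
      (∑ d ∈ Finset.Ioc 0 x, f d) * ∑ m ∈ Finset.Ioc 0 x, g m := by
  rw [ArithmeticFunction.sum_Ioc_mul_eq_sum_prod_filter, Finset.sum_mul_sum, ← Finset.sum_product']
  exact Finset.sum_le_sum_of_subset_of_nonneg (Finset.filter_subset _ _)
    fun _ _ _ => mul_nonneg (hf _) (hg _)

theorem mul_sum_le_sum_Ioc_mul (hf : ∀ n, 0 ≤ f n) (hg : ∀ n, 0 ≤ g n) {x y z : ℕ}
    (h : y * z ≤ x) :
    (∑ d ∈ Finset.Ioc 0 y, f d) * ∑ m ∈ Finset.Ioc 0 z, g m ≤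
      ∑ n ∈ Finset.Ioc 0 x, (f * g) n := by
  rw [ArithmeticFunction.sum_Ioc_mul_eq_sum_prod_filter, Finset.sum_mul_sum, ← Finset.sum_product']
  refine Finset.sum_le_sum_of_subset_of_nonneg (fun ⟨d, m⟩ hdm => ?_)
    fun _ _ _ => mul_nonneg (hf _) (hg _)
  simp only [Finset.mem_product, Finset.mem_Ioc, Finset.mem_filter] at hdm ⊢
  obtain ⟨⟨hd, hdy⟩, hm, hmz⟩ := hdm
  have hdmx : d * m ≤ x := (Nat.mul_le_mul hdy hmz).trans h
  exact ⟨⟨⟨hd, (Nat.le_mul_of_pos_right d hm).trans hdmx⟩,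
    hm, (Nat.le_mul_of_pos_left m hd).trans hdmx⟩, hdmx⟩

end Convolution

section Multiples

/-- The set of multiples `M_B ∩ ℕ` of `B` inside the natural numbers. -/
def natMultiples (B : Set ℕ) : Set ℕ := {n | ∃ b ∈ B, b ∣ n}

variable {r s : ℝ}

theorem preimage_multiplesZ (B : Set ℕ) : ((↑) : ℕ → ℤ) ⁻¹' multiplesZ B = natMultiples B := by
  ext n
  simp [multiplesZ, natMultiples, Int.natCast_dvd_natCast]

theorem zetaRatio_mul_dirichletTerm_natMultiples_le (B : Set ℕ) (hrs : r ≤ s) (n : ℕ) :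
    (zetaRatio r s * dirichletTerm (natMultiples B) s) n ≤ dirichletTerm (natMultiples B) r n := by
  by_cases hn : n ∈ natMultiples B
  · calc (zetaRatio r s * dirichletTerm (natMultiples B) s) n
        ≤ (zetaRatio r s * dirichletTerm univ s) n := by
          simp only [ArithmeticFunction.mul_apply]
          exact Finset.sum_le_sum fun d _ => mul_le_mul_of_nonneg_left
            (dirichletTerm_le_univ _ s _) (zetaRatio_nonneg hrs _)
      _ = dirichletTerm (natMultiples B) r n := by
          simp [zetaRatio_mul_dirichletTerm_univ, dirichletTerm_apply, hn]
  · rw [ArithmeticFunction.mul_apply]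
    refine (Finset.sum_eq_zero fun d hd => ?_).trans_le (dirichletTerm_nonneg _ _ _)
    have hd2 : d.2 ∉ natMultiples B := by
      rintro ⟨b, hb, hbd⟩
      exact hn ⟨b, hb, (Nat.mem_divisorsAntidiagonal.mp hd).1 ▸ hbd.mul_left d.1⟩
    simp [dirichletTerm_apply, hd2]

theorem partialDirichletSum_univ_mul_le (B : Set ℕ) (hrs : r ≤ s) (hs : 1 < s) {x y z : ℕ}
    (h : y * z ≤ x) :
    partialDirichletSum univ r y * partialDirichletSum (natMultiples B) s z ≤
      dirichletSum univ s * partialDirichletSum (natMultiples B) r x := by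
  have hratio : ∀ n, 0 ≤ zetaRatio r s n := zetaRatio_nonneg hrs
  have hupper : partialDirichletSum univ r y ≤
      (∑ d ∈ Finset.Ioc 0 y, zetaRatio r s d) * dirichletSum univ s := by
    rw [partialDirichletSum, ← zetaRatio_mul_dirichletTerm_univ r s]
    exact (sum_Ioc_mul_le_mul_sum hratio (dirichletTerm_nonneg univ s) y).trans
      (mul_le_mul_of_nonneg_left (partialDirichletSum_le_dirichletSum univ hs y)
        (Finset.sum_nonneg fun d _ => hratio d))
  have hlower : (∑ d ∈ Finset.Ioc 0 y, zetaRatio r s d) * partialDirichletSum (natMultiples B) s z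
      ≤ partialDirichletSum (natMultiples B) r x :=
    (mul_sum_le_sum_Ioc_mul hratio (dirichletTerm_nonneg _ s) h).trans
      (Finset.sum_le_sum fun n _ => zetaRatio_mul_dirichletTerm_natMultiples_le B hrs n)
  calc partialDirichletSum univ r y * partialDirichletSum (natMultiples B) s z
      ≤ (∑ d ∈ Finset.Ioc 0 y, zetaRatio r s d) * dirichletSum univ s *
          partialDirichletSum (natMultiples B) s z :=
        mul_le_mul_of_nonneg_right hupper (partialDirichletSum_nonneg _ s z)
    _ = dirichletSum univ s * ((∑ d ∈ Finset.Ioc 0 y, zetaRatio r s d) *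
          partialDirichletSum (natMultiples B) s z) := by ring
    _ ≤ dirichletSum univ s * partialDirichletSum (natMultiples B) r x :=
        mul_le_mul_of_nonneg_left hlower (dirichletSum_nonneg univ s)

end Multiples

section LogDensity

variable {A A' : Set ℤ} {c : ℝ}

theorem logWeight_eq (A : Set ℤ) (n : ℕ) :
    logWeight A n = (Real.log n)⁻¹ * partialDirichletSum ((↑) ⁻¹' A) 1 n := by
  rw [logWeight, partialDirichletSum]
  refine congrArg _ (Finset.sum_congr rfl fun k hk => ?_)
  have hk0 : k ≠ 0 := Nat.one_le_iff_ne_zero.mp (Finset.mem_Icc.mp hk).1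
  by_cases hA : (k : ℤ) ∈ A <;> simp [dirichletTerm_apply, hk0, hA, Real.rpow_neg_one]

theorem logWeight_nonneg (A : Set ℤ) (n : ℕ) : 0 ≤ logWeight A n := by
  rw [logWeight_eq]
  exact mul_nonneg (inv_nonneg.mpr (Real.log_natCast_nonneg n)) (partialDirichletSum_nonneg _ _ _)

theorem logWeight_mono (h : A ⊆ A') (n : ℕ) : logWeight A n ≤ logWeight A' n := by
  rw [logWeight_eq, logWeight_eq]
  exact mul_le_mul_of_nonneg_left (partialDirichletSum_mono (preimage_mono h) 1 n)
    (inv_nonneg.mpr (Real.log_natCast_nonneg n))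

theorem tendsto_inv_log_natCast : Tendsto (fun n : ℕ => (Real.log n)⁻¹) atTop (𝓝 0) :=
  (Real.tendsto_log_atTop.comp tendsto_natCast_atTop_atTop).inv_tendsto_atTop

theorem hasLogDensity_univ : HasLogDensity univ 1 := by
  have hlim := (tendsto_inv_log_natCast.mul Real.tendsto_harmonic_sub_log).const_add 1
  rw [zero_mul, add_zero] at hlim
  refine hlim.congr' ?_
  filter_upwards [eventually_ge_atTop 2] with n hn
  have hlog : Real.log n ≠ 0 := (Real.log_pos (by exact_mod_cast hn)).ne'
  rw [logWeight_eq, preimage_univ, partialDirichletSum_univ_one]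
  field_simp
  ring

theorem isBoundedUnder_le_logWeight (A : Set ℤ) : IsBoundedUnder (· ≤ ·) atTop (logWeight A) :=
  hasLogDensity_univ.isBoundedUnder_le.mono_le
    (Eventually.of_forall (logWeight_mono (subset_univ A)))

theorem isBoundedUnder_ge_logWeight (A : Set ℤ) : IsBoundedUnder (· ≥ ·) atTop (logWeight A) :=
  isBoundedUnder_of ⟨0, logWeight_nonneg A⟩

theorem le_logDensLow_of_tendsto {f : ℕ → ℝ} (hf : Tendsto f atTop (𝓝 c))
    (h : ∀ᶠ n in atTop, f n ≤ logWeight A n) : c ≤ logDensLow A :=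
  hf.liminf_eq ▸ liminf_le_liminf h hf.isBoundedUnder_ge
    (isBoundedUnder_le_logWeight A).isCoboundedUnder_ge

theorem logDensLow_nonneg (A : Set ℤ) : 0 ≤ logDensLow A :=
  le_logDensLow_of_tendsto tendsto_const_nhds (Eventually.of_forall (logWeight_nonneg A))

theorem logDensLow_mono (h : A ⊆ A') : logDensLow A ≤ logDensLow A' :=
  liminf_le_liminf (Eventually.of_forall (logWeight_mono h)) (isBoundedUnder_ge_logWeight A)
    (isBoundedUnder_le_logWeight A').isCoboundedUnder_ge

theorem logDensLow_le_one (A : Set ℤ) : logDensLow A ≤ 1 :=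
  (logDensLow_mono (subset_univ A)).trans hasLogDensity_univ.liminf_eq.le

theorem partialDirichletSum_div_le_logDensLow (B : Set ℕ) {s : ℝ} (hs : 1 < s) {K : ℕ}
    (hK : K ≠ 0) :
    partialDirichletSum (natMultiples B) s K / dirichletSum univ s ≤
      logDensLow (multiplesZ B) := by
  have hpos := dirichletSum_univ_pos hs
  set q := partialDirichletSum (natMultiples B) s K / dirichletSum univ s
  have hlim : Tendsto (fun n : ℕ => (1 - (Real.log n)⁻¹ * Real.log K) * q) atTop (𝓝 q) := by
    simpa using ((tendsto_inv_log_natCast.mul_const (Real.log K)).const_sub 1).mul_const q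
  refine le_logDensLow_of_tendsto hlim ?_
  filter_upwards [eventually_ge_atTop 2] with n hn
  have hlog : 0 < Real.log n := Real.log_pos (by exact_mod_cast hn)
  have hharmonic : Real.log n - Real.log K ≤ partialDirichletSum univ 1 (n / K) := by
    rw [partialDirichletSum_univ_one, ← Real.log_div (by positivity) (by positivity)]
    simpa only [Nat.floor_div_natCast, Nat.floor_natCast] using
      log_le_harmonic_floor ((n : ℝ) / K) (by positivity)
  have hconv := partialDirichletSum_univ_mul_le B hs.le hs (Nat.div_mul_le_self n K)
  rw [logWeight_eq, preimage_multiplesZ, le_inv_mul_iff₀ hlog]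
  calc Real.log n * ((1 - (Real.log n)⁻¹ * Real.log K) * q)
      = (Real.log n - Real.log K) * q := by field_simp
    _ ≤ partialDirichletSum univ 1 (n / K) * q := mul_le_mul_of_nonneg_right hharmonic
        (div_nonneg (partialDirichletSum_nonneg _ s K) hpos.le)
    _ ≤ partialDirichletSum (natMultiples B) 1 n := by
        rwa [← mul_div_assoc, div_le_iff₀' hpos]

theorem zetaDensity_natMultiples_le_logDensLow (B : Set ℕ) {s : ℝ} (hs : 1 < s) :
    zetaDensity (natMultiples B) s ≤ logDensLow (multiplesZ B) :=
  le_of_tendsto ((tendsto_partialDirichletSum _ hs).div_const _)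
    ((eventually_ne_atTop 0).mono fun _ => partialDirichletSum_div_le_logDensLow B hs)

end LogDensity

section DavenportErdos

variable {A : Set ℤ} {T U : Set ℕ} {c C r s : ℝ}

theorem le_sum_Ioc_mul_of_antitoneOn {a v : ℕ → ℝ} (hv : AntitoneOn v (Ici 1))
    (ha : ∀ k, -C ≤ ∑ n ∈ Finset.Ioc 0 k, a n) (k : ℕ) :
    v (k + 1) * (∑ n ∈ Finset.Ioc 0 k, a n + C) - C * v 1 ≤
      ∑ n ∈ Finset.Ioc 0 k, a n * v n := by
  induction k with
  | zero => simp [mul_comm]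
  | succ k ih =>
    have hdecr : v (k + 2) ≤ v (k + 1) := hv (by simp) (by simp) (by simp)
    have hsum : 0 ≤ ∑ n ∈ Finset.Ioc 0 (k + 1), a n + C := by linarith [ha (k + 1)]
    rw [Finset.sum_Ioc_succ_top k.zero_le] at hsum ⊢
    rw [Finset.sum_Ioc_succ_top k.zero_le]
    linarith [mul_le_mul_of_nonneg_right hdecr hsum]

theorem partialDirichletSum_ge_of_exponent_le (hrs : r ≤ s)
    (h : ∀ k, c * partialDirichletSum U r k - C ≤ partialDirichletSum T r k) (k : ℕ) :
    c * partialDirichletSum U s k - C ≤ partialDirichletSum T s k := by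
  have hsum : ∀ k, ∑ n ∈ Finset.Ioc 0 k, (dirichletTerm T r n - c * dirichletTerm U r n) =
      partialDirichletSum T r k - c * partialDirichletSum U r k := fun k => by
    rw [Finset.sum_sub_distrib, ← Finset.mul_sum, partialDirichletSum, partialDirichletSum]
  have hanti : AntitoneOn (fun n : ℕ => (n : ℝ) ^ (r - s)) (Ici 1) := fun m hm n _ hmn =>
    Real.rpow_le_rpow_of_nonpos (by exact_mod_cast hm) (by exact_mod_cast hmn)
      (sub_nonpos.mpr hrs)
  have habel := le_sum_Ioc_mul_of_antitoneOn (C := C) hanti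
    (fun k => by linarith [h k, hsum k]) k
  simp only [sub_mul, mul_assoc, dirichletTerm_mul_rpow, Finset.sum_sub_distrib, ← Finset.mul_sum,
    Nat.cast_one, Real.one_rpow, mul_one] at habel
  have htail := mul_nonneg (by positivity : 0 ≤ ((k + 1 : ℕ) : ℝ) ^ (r - s))
    (by linarith [h k] : 0 ≤ partialDirichletSum T r k - c * partialDirichletSum U r k + C)
  simp only [partialDirichletSum] at htail ⊢
  linarith

theorem dirichletSum_ge_of_partialDirichletSum_ge (hrs : r ≤ s) (hs : 1 < s)
    (h : ∀ k, c * partialDirichletSum U r k - C ≤ partialDirichletSum T r k) :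
    c * dirichletSum U s - C ≤ dirichletSum T s :=
  le_of_tendsto_of_tendsto' (((tendsto_partialDirichletSum U hs).const_mul c).sub_const C)
    (tendsto_partialDirichletSum T hs) (partialDirichletSum_ge_of_exponent_le hrs h)

theorem exists_mul_partialDirichletSum_univ_sub_le (h : c < logDensLow A) :
    ∃ C, ∀ k, c * partialDirichletSum univ 1 k - C ≤ partialDirichletSum ((↑) ⁻¹' A) 1 k := by
  obtain ⟨c', hcc', hc'⟩ := exists_between h
  have heventually : ∀ᶠ k in atTop,
      0 ≤ partialDirichletSum ((↑) ⁻¹' A) 1 k - c * partialDirichletSum univ 1 k := by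
    filter_upwards [eventually_lt_of_lt_liminf hc' (isBoundedUnder_ge_logWeight A),
      (hasLogDensity_univ.const_mul c).eventually_lt_const (by rwa [mul_one]),
      eventually_ge_atTop 2] with k hA huniv hk
    have hlog : 0 < (Real.log k)⁻¹ := inv_pos.mpr (Real.log_pos (by exact_mod_cast hk))
    have hlt := huniv.trans hA
    rw [logWeight_eq, logWeight_eq, preimage_univ, mul_left_comm] at hlt
    exact sub_nonneg.mpr (lt_of_mul_lt_mul_left hlt hlog.le).le
  obtain ⟨m, hm⟩ := (isBoundedUnder_of_eventually_ge heventually).bddBelow_range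
  exact ⟨-m, fun k => by linarith [hm ⟨k, rfl⟩]⟩

theorem eventually_lt_zetaDensity (h : c < logDensLow A) :
    ∀ᶠ s in 𝓝[>] 1, c < zetaDensity ((↑) ⁻¹' A) s := by
  obtain ⟨c', hcc', hc'⟩ := exists_between h
  obtain ⟨C, hC⟩ := exists_mul_partialDirichletSum_univ_sub_le hc'
  have hlim : Tendsto (fun s => c' - C * (dirichletSum univ s)⁻¹) (𝓝[>] 1) (𝓝 c') := by
    simpa using (tendsto_inv_dirichletSum_univ.const_mul C).const_sub c'
  filter_upwards [hlim.eventually_const_lt hcc', self_mem_nhdsWithin] with s hlt hs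
  have hpos := dirichletSum_univ_pos hs
  refine hlt.trans_le ?_
  rw [zetaDensity, le_div_iff₀ hpos, sub_mul, mul_assoc, inv_mul_cancel₀ hpos.ne', mul_one]
  exact dirichletSum_ge_of_partialDirichletSum_ge (le_of_lt hs) hs hC

theorem tendsto_zetaDensity_natMultiples (B : Set ℕ) :
    Tendsto (zetaDensity (natMultiples B)) (𝓝[>] 1) (𝓝 (logDensLow (multiplesZ B))) := by
  refine tendsto_order.mpr ⟨fun c hc => ?_, fun c hc => ?_⟩
  · rw [← preimage_multiplesZ]
    exact eventually_lt_zetaDensity hc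
  · filter_upwards [self_mem_nhdsWithin] with s hs
    exact (zetaDensity_natMultiples_le_logDensLow B hs).trans_lt hc

theorem tendsto_zetaDensity_compl_natMultiples (B : Set ℕ) :
    Tendsto (zetaDensity (natMultiples B)ᶜ) (𝓝[>] 1) (𝓝 (1 - logDensLow (multiplesZ B))) :=
  ((tendsto_zetaDensity_natMultiples B).const_sub 1).congr' <| by
    filter_upwards [self_mem_nhdsWithin] with s hs
    exact (zetaDensity_compl _ hs).symm

end DavenportErdos

section Continuity

variable {B B' : Set ℕ} {s : ℝ}

theorem natMultiples_mono (h : B ⊆ B') : natMultiples B ⊆ natMultiples B' :=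
  fun _ ⟨b, hb, hbn⟩ => ⟨b, h hb, hbn⟩

theorem natMultiples_iUnion {ι : Sort*} (C : ι → Set ℕ) :
    natMultiples (⋃ i, C i) = ⋃ i, natMultiples (C i) := by
  ext n
  simp only [natMultiples, mem_iUnion, mem_ofPred_eq]
  exact ⟨fun ⟨b, ⟨i, hb⟩, hbn⟩ => ⟨i, b, hb, hbn⟩, fun ⟨i, b, hb, hbn⟩ => ⟨b, ⟨i, hb⟩, hbn⟩⟩

theorem logDensLow_multiplesZ_mono (h : ∀ n ≠ 0, n ∈ natMultiples B → n ∈ natMultiples B') :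
    logDensLow (multiplesZ B) ≤ logDensLow (multiplesZ B') :=
  le_of_tendsto_of_tendsto (tendsto_zetaDensity_natMultiples B)
    (tendsto_zetaDensity_natMultiples B') <| by
    filter_upwards [self_mem_nhdsWithin] with s hs
    exact zetaDensity_mono h hs

theorem tendsto_dirichletSum_iUnion {ι : Type*} [Preorder ι] {T : ι → Set ℕ} (hT : Monotone T)
    (hs : 1 < s) :
    Tendsto (fun i => dirichletSum (T i) s) atTop (𝓝 (dirichletSum (⋃ i, T i) s)) := by
  refine tendsto_tsum_of_dominated_convergence (summable_dirichletTerm univ hs) (fun n => ?_)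
    (Eventually.of_forall fun i n => ?_)
  · refine tendsto_nhds_of_eventually_eq ?_
    by_cases hn : ∃ i, n ∈ T i
    · obtain ⟨i, hi⟩ := hn
      filter_upwards [eventually_ge_atTop i] with j hij
      simp [dirichletTerm_apply, hT hij hi, mem_iUnion_of_mem i hi]
    · refine Eventually.of_forall fun i => ?_
      simp [dirichletTerm_apply, not_exists.mp hn]
  · rw [Real.norm_of_nonneg (dirichletTerm_nonneg _ _ _)]
    exact dirichletTerm_le_univ _ _ _

theorem tendsto_logDensLow_multiplesZ_iUnion {ι : Type*} [Preorder ι] {C : ι → Set ℕ}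
    (hC : Monotone C) :
    Tendsto (fun i => logDensLow (multiplesZ (C i))) atTop
      (𝓝 (logDensLow (multiplesZ (⋃ i, C i)))) := by
  refine tendsto_order.mpr ⟨fun c hc => ?_, fun c hc => Eventually.of_forall fun i => ?_⟩
  · obtain ⟨s, hcs, hs⟩ := (((tendsto_zetaDensity_natMultiples _).eventually_const_lt hc).and
      self_mem_nhdsWithin).exists
    have hlim := (tendsto_dirichletSum_iUnion (fun _ _ h => natMultiples_mono (hC h)) hs).div_const
      (dirichletSum univ s)
    rw [← natMultiples_iUnion] at hlim
    filter_upwards [hlim.eventually_const_lt hcs] with i hi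
    exact hi.trans_le (zetaDensity_natMultiples_le_logDensLow (C i) hs)
  · exact (logDensLow_multiplesZ_mono fun _ _ hn =>
      natMultiples_mono (subset_iUnion C i) hn).trans_lt hc

theorem iUnion_Bsmooth (B : Set ℕ) : ⋃ N, Bsmooth B N = B \ {0} := by
  ext b
  simp only [mem_iUnion, Bsmooth, mem_ofPred_eq, Set.mem_sdiff, mem_singleton_iff]
  constructor
  · rintro ⟨N, hb, hbN⟩
    refine ⟨hb, ?_⟩
    rintro rfl
    obtain ⟨p, hNp, hp⟩ := Nat.exists_infinite_primes (N + 1)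
    exact absurd (hbN p hp (dvd_zero p)) (by omega)
  · exact fun ⟨hb, hb0⟩ => ⟨b, hb, fun p _ hpb => Nat.le_of_dvd (Nat.pos_of_ne_zero hb0) hpb⟩

theorem tendsto_logDensLow_multiplesZ_Bsmooth (B : Set ℕ) :
    Tendsto (fun N => logDensLow (multiplesZ (Bsmooth B N))) atTop
      (𝓝 (logDensLow (multiplesZ B))) := by
  have hmono : Monotone (Bsmooth B) := fun M N h b hb => ⟨hb.1, fun p hp hpb =>
    (hb.2 p hp hpb).trans h⟩
  have hzero : logDensLow (multiplesZ (B \ {0})) = logDensLow (multiplesZ B) := by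
    refine le_antisymm (logDensLow_multiplesZ_mono fun _ _ hn => natMultiples_mono sdiff_subset hn)
      (logDensLow_multiplesZ_mono fun n hn ⟨b, hb, hbn⟩ => ⟨b, ⟨hb, ?_⟩, hbn⟩)
    exact ne_zero_of_dvd_ne_zero hn hbn
  simpa only [iUnion_Bsmooth, hzero] using tendsto_logDensLow_multiplesZ_iUnion hmono

end Continuity

section Independence

variable {P A D T U V : Set ℕ} {s : ℝ}

/-- The positive integers all of whose prime factors lie in `P`. -/
def factoredBy (P : Set ℕ) : Set ℕ := {n | n ≠ 0 ∧ ∀ p, p.Prime → p ∣ n → p ∈ P}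

theorem coprime_of_mem_factoredBy {u v : ℕ} (hu : u ∈ factoredBy P) (hv : v ∈ factoredBy Pᶜ) :
    u.Coprime v :=
  Nat.coprime_of_dvd fun p hp hpu hpv => hv.2 p hp hpv (hu.2 p hp hpu)

theorem prime_mul_mem_factoredBy {p n : ℕ} (hp : p.Prime) (hpP : p ∈ P) (hn : n ∈ factoredBy P) :
    p * n ∈ factoredBy P := by
  refine ⟨mul_ne_zero hp.ne_zero hn.1, fun q hq hqpn => ?_⟩
  rcases hq.dvd_mul.mp hqpn with hqp | hqn
  · exact (Nat.prime_dvd_prime_iff_eq hq hp).mp hqp ▸ hpP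
  · exact hn.2 q hq hqn

theorem exists_mul_eq_of_ne_zero (P : Set ℕ) {n : ℕ} (hn : n ≠ 0) :
    ∃ u ∈ factoredBy P, ∃ v ∈ factoredBy Pᶜ, u * v = n := by
  induction n using induction_on_primes with
  | zero => exact absurd rfl hn
  | one =>
    have hone : ∀ Q, 1 ∈ factoredBy Q := fun Q =>
      ⟨one_ne_zero, fun p hp hp1 => absurd hp1 hp.not_dvd_one⟩
    exact ⟨1, hone P, 1, hone Pᶜ, mul_one 1⟩
  | prime_mul p n hp ih =>
    obtain ⟨u, hu, v, hv, rfl⟩ := ih (right_ne_zero_of_mul hn)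
    by_cases hpP : p ∈ P
    · exact ⟨p * u, prime_mul_mem_factoredBy hp hpP hu, v, hv, mul_assoc p u v⟩
    · exact ⟨u, hu, p * v, prime_mul_mem_factoredBy hp hpP hv, mul_left_comm u p v⟩

theorem eq_and_eq_of_mul_eq_mul {u u' v v' : ℕ} (hu : u ∈ factoredBy P) (hu' : u' ∈ factoredBy P)
    (hv : v ∈ factoredBy Pᶜ) (hv' : v' ∈ factoredBy Pᶜ) (h : u * v = u' * v') :
    u = u' ∧ v = v' := by
  have huu' : u = u' := Nat.dvd_antisymm
    ((coprime_of_mem_factoredBy hu hv').dvd_of_dvd_mul_right (h ▸ dvd_mul_right u v))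
    ((coprime_of_mem_factoredBy hu' hv).dvd_of_dvd_mul_right (h ▸ dvd_mul_right u' v'))
  subst huu'
  exact ⟨rfl, Nat.eq_of_mul_eq_mul_left (Nat.pos_of_ne_zero hu.1) h⟩

theorem dirichletSum_eq_mul_of_factoredBy (hs : 1 < s)
    (h : ∀ u ∈ factoredBy P, ∀ v ∈ factoredBy Pᶜ, (u * v ∈ T ↔ u ∈ U ∧ v ∈ V)) :
    dirichletSum T s =
      dirichletSum (U ∩ factoredBy P) s * dirichletSum (V ∩ factoredBy Pᶜ) s := by
  have hterm : ∀ u ∈ factoredBy P, ∀ v ∈ factoredBy Pᶜ, dirichletTerm T s (u * v) =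
      dirichletTerm (U ∩ factoredBy P) s u * dirichletTerm (V ∩ factoredBy Pᶜ) s v :=
    fun u hu v hv => dirichletTerm_mul (by simp [h u hu v hv, hu, hv]) s
  have hmem : ∀ {W Q : Set ℕ} {n}, dirichletTerm (W ∩ Q) s n ≠ 0 → n ∈ Q := by
    intro W Q n hn
    by_contra hnQ
    exact hn (by simp [dirichletTerm_apply, hnQ])
  simp only [dirichletSum]
  rw [tsum_mul_tsum_of_summable_norm (summable_dirichletTerm _ hs).norm
    (summable_dirichletTerm _ hs).norm]
  refine tsum_eq_tsum_of_ne_zero_bij (fun x => x.1.1 * x.1.2) ?_ ?_ ?_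
  · rintro ⟨⟨u, v⟩, huv⟩ ⟨⟨u', v'⟩, huv'⟩ heq
    obtain ⟨rfl, rfl⟩ := eq_and_eq_of_mul_eq_mul (hmem (left_ne_zero_of_mul huv))
      (hmem (left_ne_zero_of_mul huv')) (hmem (right_ne_zero_of_mul huv))
      (hmem (right_ne_zero_of_mul huv')) heq
    rfl
  · intro n hn
    have hn0 : n ≠ 0 := by
      rintro rfl
      exact hn (dirichletTerm T s).map_zero
    obtain ⟨u, hu, v, hv, rfl⟩ := exists_mul_eq_of_ne_zero P hn0
    exact ⟨⟨(u, v), (hterm u hu v hv).symm.trans_ne hn⟩, rfl⟩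
  · rintro ⟨⟨u, v⟩, huv⟩
    exact hterm u (hmem (left_ne_zero_of_mul huv)) v (hmem (right_ne_zero_of_mul huv))

theorem zetaDensity_inter_of_factoredBy (hs : 1 < s)
    (hA : ∀ u ∈ factoredBy P, ∀ v ∈ factoredBy Pᶜ, (u * v ∈ A ↔ u ∈ A))
    (hD : ∀ u ∈ factoredBy P, ∀ v ∈ factoredBy Pᶜ, (u * v ∈ D ↔ v ∈ D)) :
    zetaDensity (A ∩ D) s = zetaDensity A s * zetaDensity D s := by
  have hAD := dirichletSum_eq_mul_of_factoredBy (P := P) (T := A ∩ D) (U := A) (V := D) hs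
    fun u hu v hv => and_congr (hA u hu v hv) (hD u hu v hv)
  have hA' := dirichletSum_eq_mul_of_factoredBy (P := P) (T := A) (U := A) (V := univ) hs
    fun u hu v hv => by simp [hA u hu v hv]
  have hD' := dirichletSum_eq_mul_of_factoredBy (P := P) (T := D) (U := univ) (V := D) hs
    fun u hu v hv => by simp [hD u hu v hv]
  have huniv := dirichletSum_eq_mul_of_factoredBy (P := P) (T := univ) (U := univ) (V := univ) hs
    fun u _ v _ => by simp
  have hne := huniv ▸ (dirichletSum_univ_pos hs).ne'
  have hP := left_ne_zero_of_mul hne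
  have hPc := right_ne_zero_of_mul hne
  rw [zetaDensity, zetaDensity, zetaDensity, hAD, hA', hD', huniv]
  field_simp

theorem natMultiples_union (C D : Set ℕ) :
    natMultiples (C ∪ D) = natMultiples C ∪ natMultiples D := by
  ext n
  simp only [natMultiples, mem_union, mem_ofPred_eq, or_and_right, exists_or]

theorem zetaDensity_compl_natMultiples_union {C D : Set ℕ} (h : ∀ c ∈ C, ∀ d ∈ D, c.Coprime d)
    (hs : 1 < s) :
    zetaDensity (natMultiples (C ∪ D))ᶜ s =
      zetaDensity (natMultiples C)ᶜ s * zetaDensity (natMultiples D)ᶜ s := by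
  let P : Set ℕ := {p | ∃ c ∈ C, p ∣ c}
  have hC : ∀ c ∈ C, ∀ v ∈ factoredBy Pᶜ, c.Coprime v := fun c hc v hv =>
    Nat.coprime_of_dvd fun p hp hpc hpv => hv.2 p hp hpv ⟨c, hc, hpc⟩
  have hD : ∀ d ∈ D, ∀ u ∈ factoredBy P, d.Coprime u := fun d hd u hu =>
    Nat.coprime_of_dvd fun p hp hpd hpu =>
      have ⟨c, hc, hpc⟩ := hu.2 p hp hpu
      Nat.not_coprime_of_dvd_of_dvd hp.one_lt hpc hpd (h c hc d hd)
  rw [natMultiples_union, compl_union]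
  refine zetaDensity_inter_of_factoredBy (P := P) hs (fun u _ v hv => not_congr ?_)
    fun u hu v _ => not_congr ?_
  · exact exists_congr fun c => and_congr_right fun hc => (hC c hc v hv).dvd_mul_right
  · exact exists_congr fun d => and_congr_right fun hd => (hD d hd u hu).dvd_mul_left

theorem one_sub_logDensLow_multiplesZ_union {C D : Set ℕ}
    (h : ∀ c ∈ C, ∀ d ∈ D, c.Coprime d) :
    1 - logDensLow (multiplesZ (C ∪ D)) =
      (1 - logDensLow (multiplesZ C)) * (1 - logDensLow (multiplesZ D)) := by
  refine tendsto_nhds_unique_of_eventuallyEq (tendsto_zetaDensity_compl_natMultiples _)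
    ((tendsto_zetaDensity_compl_natMultiples C).mul (tendsto_zetaDensity_compl_natMultiples D)) ?_
  filter_upwards [self_mem_nhdsWithin] with s hs
  exact zetaDensity_compl_natMultiples_union h hs

end Independence

section PairwiseCoprime

theorem zetaDensity_natMultiples_singleton {b : ℕ} (hb : b ≠ 0) {s : ℝ} (hs : 1 < s) :
    zetaDensity (natMultiples {b}) s = (b : ℝ) ^ (-s) := by
  have hterm : ∀ n, dirichletTerm (natMultiples {b}) s (b * n) =
      (b : ℝ) ^ (-s) * dirichletTerm univ s n := fun n => by
    rw [dirichletTerm_mul (U := {b}) (V := univ) (by simp [natMultiples])]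
    simp [dirichletTerm_apply, hb]
  have hsupport : Function.support (dirichletTerm (natMultiples {b}) s) ⊆ range (b * ·) := by
    intro n hn
    by_contra hnb
    refine hn ?_
    have hnmul : n ∉ natMultiples {b} := fun ⟨_, rfl, m, hm⟩ => hnb ⟨m, hm.symm⟩
    simp [dirichletTerm_apply, hnmul]
  rw [zetaDensity, div_eq_iff (dirichletSum_univ_pos hs).ne', dirichletSum,
    ← (mul_right_injective₀ hb).tsum_eq hsupport, tsum_congr hterm, tsum_mul_left, dirichletSum]

theorem logDensLow_multiplesZ_singleton {b : ℕ} (hb : b ≠ 0) :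
    logDensLow (multiplesZ {b}) = (b : ℝ)⁻¹ := by
  have hpow : Tendsto (fun s : ℝ => (b : ℝ) ^ (-s)) (𝓝[>] 1) (𝓝 (b : ℝ)⁻¹) := by
    refine tendsto_nhdsWithin_of_tendsto_nhds (Continuous.tendsto' ?_ _ _ (Real.rpow_neg_one _))
    exact continuous_const.rpow continuous_neg fun _ => Or.inl (by exact_mod_cast hb)
  refine tendsto_nhds_unique_of_eventuallyEq (tendsto_zetaDensity_natMultiples {b}) hpow ?_
  filter_upwards [self_mem_nhdsWithin] with s hs
  exact zetaDensity_natMultiples_singleton hb hs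

theorem one_sub_logDensLow_multiplesZ_finset {F : Finset ℕ} (h0 : 0 ∉ F)
    (hF : (F : Set ℕ).Pairwise Nat.Coprime) :
    1 - logDensLow (multiplesZ F) = ∏ b ∈ F, (1 - (b : ℝ)⁻¹) := by
  induction F using Finset.induction_on with
  | empty =>
    have hempty : logWeight (multiplesZ ∅) = fun _ => 0 := by
      ext n
      simp [logWeight, multiplesZ]
    simp [logDensLow, hempty]
  | insert b F hbF ih =>
    obtain ⟨hb0, h0F⟩ : 0 ≠ b ∧ 0 ∉ F := by simpa using h0
    rw [Finset.coe_insert] at hF ⊢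
    have hcoprime : ∀ c ∈ ({b} : Set ℕ), ∀ d ∈ (F : Set ℕ), c.Coprime d := by
      rintro _ rfl d hd
      exact hF (mem_insert _ _) (mem_insert_of_mem _ hd) (ne_of_mem_of_not_mem hd hbF).symm
    rw [insert_eq, one_sub_logDensLow_multiplesZ_union hcoprime,
      logDensLow_multiplesZ_singleton hb0.symm, ih h0F (hF.mono (subset_insert _ _)),
      Finset.prod_insert hbF]

theorem logDensLow_multiplesZ_lt_one_of_prime {F : Finset ℕ} (hF : ∀ p ∈ F, p.Prime) :
    logDensLow (multiplesZ F) < 1 := by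
  rw [← sub_pos, one_sub_logDensLow_multiplesZ_finset (fun h => Nat.not_prime_zero (hF 0 h))
    fun p hp q hq hpq => (Nat.coprime_primes (hF p hp) (hF q hq)).mpr hpq]
  exact Finset.prod_pos fun p hp =>
    sub_pos.mpr (inv_lt_one_of_one_lt₀ (by exact_mod_cast (hF p hp).one_lt))

end PairwiseCoprime

section Behrend

variable {B : Set ℕ}

theorem isBehrend_Btilde (h : IsBehrend B) (N : ℕ) : IsBehrend (Btilde B N) := by
  let P : Finset ℕ := Nat.primesBelow (N + 1)
  have hcoprime : ∀ p ∈ (P : Set ℕ), ∀ b ∈ Btilde B N, p.Coprime b := by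
    intro p hp b hb
    obtain ⟨hpN, hpprime⟩ := Nat.mem_primesBelow.mp hp
    refine (Nat.Prime.coprime_iff_not_dvd hpprime).mpr fun hpb => ?_
    have := hb.2 p hpprime hpb
    omega
  have hcover : logDensLow (multiplesZ B) ≤ logDensLow (multiplesZ (P ∪ Btilde B N)) := by
    refine logDensLow_multiplesZ_mono fun n _ ⟨b, hb, hbn⟩ => ?_
    by_cases hbN : ∀ p : ℕ, p.Prime → p ∣ b → N < p
    · exact ⟨b, Or.inr ⟨hb, hbN⟩, hbn⟩
    · push Not at hbN
      obtain ⟨p, hp, hpb, hpN⟩ := hbN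
      exact ⟨p, Or.inl (Nat.mem_primesBelow.mpr ⟨by omega, hp⟩), hpb.trans hbn⟩
  have hunion := one_sub_logDensLow_multiplesZ_union hcoprime
  have hP : logDensLow (multiplesZ P) < 1 :=
    logDensLow_multiplesZ_lt_one_of_prime fun p hp => Nat.prime_of_mem_primesBelow hp
  refine le_antisymm (logDensLow_le_one _) (sub_nonpos.mp ?_)
  refine nonpos_of_mul_nonpos_right (a := 1 - logDensLow (multiplesZ P)) ?_ (sub_pos.mpr hP)
  rw [← hunion, sub_nonpos, ← (h : logDensLow (multiplesZ B) = 1)]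
  exact hcover

theorem one_sub_logDensLow_multiplesZ_le_mul (B : Set ℕ) (N : ℕ) :
    1 - logDensLow (multiplesZ B) ≤
      (1 - logDensLow (multiplesZ (Bsmooth B N))) * (1 - logDensLow (multiplesZ (Btilde B N))) := by
  have hcoprime : ∀ c ∈ Bsmooth B N, ∀ d ∈ Btilde B N, c.Coprime d := fun c hc d hd =>
    Nat.coprime_of_dvd fun p hp hpc hpd => (hc.2 p hp hpc).not_gt (hd.2 p hp hpd)
  rw [← one_sub_logDensLow_multiplesZ_union hcoprime]
  refine sub_le_sub_left (logDensLow_multiplesZ_mono fun _ _ hn => natMultiples_mono ?_ hn) 1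
  exact union_subset (sep_subset _ _) (sep_subset _ _)

theorem tendsto_logDensLow_multiplesZ_Btilde (h : ¬ IsBehrend B) :
    Tendsto (fun N => logDensLow (multiplesZ (Btilde B N))) atTop (𝓝 0) := by
  have hB : 0 < 1 - logDensLow (multiplesZ B) :=
    sub_pos.mpr ((logDensLow_le_one _).lt_of_ne h)
  have hlim : Tendsto (fun N => 1 - (1 - logDensLow (multiplesZ B)) /
      (1 - logDensLow (multiplesZ (Bsmooth B N)))) atTop (𝓝 0) := by
    have hquot := ((tendsto_const_nhds (x := 1 - logDensLow (multiplesZ B))).div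
      ((tendsto_logDensLow_multiplesZ_Bsmooth B).const_sub 1) hB.ne').const_sub 1
    rwa [div_self hB.ne', sub_self] at hquot
  refine squeeze_zero (fun N => logDensLow_nonneg _) (fun N => ?_) hlim
  have hsmooth : 0 < 1 - logDensLow (multiplesZ (Bsmooth B N)) :=
    hB.trans_le (sub_le_sub_left (logDensLow_multiplesZ_mono fun _ _ hn =>
      natMultiples_mono (sep_subset _ _) hn) 1)
  rw [le_sub_comm, div_le_iff₀' hsmooth]
  exact one_sub_logDensLow_multiplesZ_le_mul B N

end Behrend

theorem not_behrend_iff_tendsto_zero_general (B : Set ℕ) :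
    ¬ IsBehrend B ↔
      Tendsto (fun N : ℕ => logDensLow (multiplesZ (Btilde B N))) atTop (𝓝 0) := by
  refine ⟨tendsto_logDensLow_multiplesZ_Btilde, fun hlim hB => ?_⟩
  have hone : ∀ N, logDensLow (multiplesZ (Btilde B N)) = 1 := isBehrend_Btilde hB
  simp only [hone] at hlim
  exact one_ne_zero (tendsto_nhds_unique tendsto_const_nhds hlim)

/-- A primitive set `B` is not Behrend if and only if `δ(M_{B̃^(N)}) → 0` as `N → ∞`. -/
theorem not_behrend_iff_tendsto_zero (B : Set ℕ) (hB0 : 0 ∉ B) (hprim : Primitive B) :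
    ¬ IsBehrend B ↔
      Tendsto (fun N : ℕ => logDensLow (multiplesZ (Btilde B N))) atTop (𝓝 0) :=
  not_behrend_iff_tendsto_zero_general B
end
end

section
/- Let ℬ ⊆ ℕ, let H be the closure of the image of the diagonal embedding Δ : ℤ → ∏_{b∈ℬ} ℤ/bℤ with normalized Haar measure m_H. Suppose 𝒜 ⊆ ℬ and 𝒞 ⊆ ℬ are coprime to each other, i.e. gcd(a,c) = 1 for all a ∈ 𝒜 and c ∈ 𝒞. Then the σ-algebra on H generated by the coordinate maps h ↦ h_a (a ∈ 𝒜) and the σ-algebra generated by the coordinate maps h ↦ h_c (c ∈ 𝒞) are independent with respect to m_H: for V₁ measurable with respect to the first and V₂ measurable with respect to the second, m_H(V₁ ∩ V₂) = m_H(V₁)·m_H(V₂). -/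
open Filter Set Topology MeasureTheory

open scoped Classical

noncomputable section

/-- The diagonal embedding `Δ : ℤ → ∏_{b ∈ B} ℤ/bℤ`. -/
def diagEmb (B : Set ℕ) : ℤ →+ ((b : B) → ZMod b) where
  toFun n := fun b => (n : ZMod b)
  map_zero' := by ext b; simp
  map_add' m n := by ext b; simp [Int.cast_add]

/-- `H`, the topological closure of `Δ(ℤ)`, as a (closed) subgroup of `∏_{b ∈ B} ℤ/bℤ`. -/
def Hgrp (B : Set ℕ) : AddSubgroup ((b : B) → ZMod b) :=
  (diagEmb B).range.topologicalClosure

instance (B : Set ℕ) [∀ b : B, NeZero (b : ℕ)] : CompactSpace (Hgrp B) :=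
  isCompact_iff_compactSpace.mp ((AddSubgroup.isClosed_topologicalClosure _).isCompact)

instance (B : Set ℕ) : MeasurableSpace (Hgrp B) := borel _

instance (B : Set ℕ) : BorelSpace (Hgrp B) := ⟨rfl⟩

/-- The normalized Haar measure `m_H` on the compact abelian group `H`. -/
def mH (B : Set ℕ) [∀ b : B, NeZero (b : ℕ)] : Measure (Hgrp B) :=
  Measure.addHaarMeasure ⊤

/-- The window `W_{B'} ⊆ H` determined by a subset `B' ⊆ B`. -/
def Wset (B : Set ℕ) (B' : Set ℕ) : Set (Hgrp B) :=
  {h | ∀ b : B, (b : ℕ) ∈ B' → (h : (b : B) → ZMod b) b ≠ 0}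

/-! If `h = k + l` with `k` and `l` stabilizing `S` and `T` respectively, then
`T ∩ (S - h)` is a translate of `S ∩ T`. When every `h` splits like this, integrating
over `h` gives independence of `S` and `T`. Sets determined by the coordinates in `A` are stabilized
by the subgroup of `H` on which these coordinates vanish, and the Chinese remainder theorem on
finitely many coordinates, together with compactness, shows that the subgroups belonging to coprime
`A` and `C` span `H`. -/

section Stabilizers

open scoped Pointwise

variable {G : Type*} [AddCommGroup G]

lemma exists_inter_preimage_add_right_eq_of_codisjoint_stabilizer {S T : Set G}
    (hST : Codisjoint (AddAction.stabilizer G S) (AddAction.stabilizer G T)) (h : G) :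
    ∃ l : G, T ∩ (· + h) ⁻¹' S = (l + ·) ⁻¹' (S ∩ T) := by
  obtain ⟨k, hk, l, hl, rfl⟩ := AddSubgroup.mem_sup.1 (hST.eq_top ▸ AddSubgroup.mem_top h)
  rw [AddAction.mem_stabilizer_set] at hk hl
  refine ⟨l, Set.ext fun x ↦ ?_⟩
  have hS : x + (k + l) ∈ S ↔ l + x ∈ S := by
    rw [← hk (l + x), vadd_eq_add, add_comm x, add_assoc]
  rw [mem_inter_iff, mem_preimage, hS, ← hl x, vadd_eq_add, and_comm, mem_preimage, mem_inter_iff]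

lemma measure_inter_mul_measure_univ_of_codisjoint_stabilizer
    [MeasurableSpace G] [MeasurableAdd₂ G] (μ : Measure G) [SFinite μ] [μ.IsAddLeftInvariant]
    {S T : Set G} (hS : MeasurableSet S) (hT : MeasurableSet T)
    (hST : Codisjoint (AddAction.stabilizer G S) (AddAction.stabilizer G T)) :
    μ (S ∩ T) * μ univ = μ S * μ T := by
  let shear : G × G → G × G := fun z ↦ (z.1, z.1 + z.2)
  have hshear : MeasurePreserving shear (μ.prod μ) (μ.prod μ) := measurePreserving_prod_add μ μ
  have hfiber (h : G) : μ ((·, h) ⁻¹' (shear ⁻¹' T ×ˢ S)) = μ (S ∩ T) := by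
    obtain ⟨l, hl⟩ := exists_inter_preimage_add_right_eq_of_codisjoint_stabilizer hST h
    exact (congrArg μ hl).trans (measure_preimage_add μ l _)
  calc μ (S ∩ T) * μ univ
      = ∫⁻ h, μ ((·, h) ⁻¹' (shear ⁻¹' T ×ˢ S)) ∂μ := by simp_rw [hfiber, lintegral_const]
    _ = μ.prod μ (shear ⁻¹' T ×ˢ S) :=
        (Measure.prod_apply_symm (hshear.measurable (hT.prod hS))).symm
    _ = μ S * μ T := by
        rw [hshear.measure_preimage (hT.prod hS).nullMeasurableSet, Measure.prod_prod, mul_comm]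

end Stabilizers

lemma iSup_comap_le_invariants {ι α : Type*} {β : ι → Type*} [MeasurableSpace α]
    {m : ∀ i, MeasurableSpace (β i)} {π : ∀ i, α → β i} {g : α → α}
    (hπ : ∀ i, Measurable (π i)) (hg : ∀ i, π i ∘ g = π i) :
    ⨆ i, (m i).comap (π i) ≤ MeasurableSpace.invariants g := by
  refine iSup_le fun i ↦ ?_
  rintro _ ⟨s, hs, rfl⟩
  exact ⟨hπ i hs, by rw [← preimage_comp, hg]⟩

lemma exists_dvd_and_dvd_one_sub_of_isCoprime {R ι κ : Type*} [CommRing R] {s : Finset ι}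
    {t : Finset κ} {f : ι → R} {g : κ → R} (h : ∀ i ∈ s, ∀ j ∈ t, IsCoprime (f i) (g j)) :
    ∃ e : R, (∀ i ∈ s, f i ∣ e) ∧ ∀ j ∈ t, g j ∣ 1 - e := by
  obtain ⟨x, y, hxy⟩ : IsCoprime (∏ i ∈ s, f i) (∏ j ∈ t, g j) :=
    .prod_left fun i hi ↦ .prod_right (h i hi)
  refine ⟨x * ∏ i ∈ s, f i, fun i hi ↦ (Finset.dvd_prod_of_mem f hi).mul_left x, fun j hj ↦ ?_⟩
  rw [← hxy, add_sub_cancel_left]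
  exact (Finset.dvd_prod_of_mem g hj).mul_left y

section Closure

variable {ι : Type*} {X : ι → Type*} [∀ i, TopologicalSpace (X i)] {S : Set (∀ i, X i)}

lemma exists_mem_forall_eq_of_mem_closure [∀ i, DiscreteTopology (X i)] {x : ∀ i, X i}
    (hx : x ∈ closure S) (u : Finset ι) : ∃ s ∈ S, ∀ i ∈ u, s i = x i := by
  have hnear : ∀ᶠ s in 𝓝 x, ∀ i ∈ u, s i = x i :=
    (Filter.eventually_all_finset u).2 fun i _ ↦
      (continuous_apply i).continuousAt.eventually ((isOpen_discrete {x i}).mem_nhds rfl)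
  exact ((mem_closure_iff_frequently.1 hx).and_eventually hnear).exists

lemma exists_mem_closure_forall_mem [∀ i, CompactSpace (X i)] {F : ∀ i, Set (X i)}
    (hF : ∀ i, IsClosed (F i)) (hS : ∀ u : Finset ι, ∃ s ∈ S, ∀ i ∈ u, s i ∈ F i) :
    ∃ x ∈ closure S, ∀ i, x i ∈ F i := by
  obtain ⟨x, hx, hxF⟩ := isClosed_closure.isCompact.inter_iInter_nonempty
    (fun i ↦ {x : ∀ i, X i | x i ∈ F i}) (fun i ↦ (hF i).preimage (continuous_apply i)) fun u ↦ by
      obtain ⟨s, hs, hsF⟩ := hS u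
      exact ⟨s, subset_closure hs, mem_iInter₂.2 hsF⟩
  exact ⟨x, hx, mem_iInter.1 hxF⟩

end Closure

section Coordinates

variable {B : Set ℕ}

/-- The σ-algebra on `H` generated by the coordinates in `D ⊆ B`. -/
abbrev coordSigma {D : Set ℕ} (hD : D ⊆ B) : MeasurableSpace (Hgrp B) :=
  ⨆ d : D, MeasurableSpace.comap (fun h : Hgrp B ↦ (h : (b : B) → ZMod b) ⟨d, hD d.2⟩) ⊤

variable (B) in
/-- The subgroup of those `h ∈ H` whose coordinates in `D` vanish, under which the sets of
`coordSigma` are invariant; `D` need not be contained in `B`. -/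
def coordKer (D : Set ℕ) : AddSubgroup (Hgrp B) where
  carrier := {h | ∀ b : B, (b : ℕ) ∈ D → (h : (b : B) → ZMod b) b = 0}
  zero_mem' _ _ := rfl
  add_mem' hx hy b hb := by simp [hx b hb, hy b hb]
  neg_mem' hx b hb := by simp [hx b hb]

lemma measurable_coord (b : B) :
    Measurable[_, ⊤] fun h : Hgrp B ↦ (h : (b : B) → ZMod b) b := fun s _ ↦
  ((isOpen_discrete s).preimage
    ((continuous_apply b).comp continuous_subtype_val)).measurableSet

lemma coordSigma_le {D : Set ℕ} (hD : D ⊆ B) :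
    coordSigma hD ≤ (inferInstance : MeasurableSpace (Hgrp B)) :=
  iSup_le fun _ ↦ (measurable_coord _).comap_le

lemma coordSigma_le_invariants_add_left {D : Set ℕ} (hD : D ⊆ B) {k : Hgrp B}
    (hk : k ∈ coordKer B D) : coordSigma hD ≤ MeasurableSpace.invariants (k + ·) :=
  iSup_comap_le_invariants (fun _ ↦ measurable_coord _) fun d ↦ funext fun h ↦ by
    simp [hk ⟨d, hD d.2⟩ d.2]

open scoped Pointwise in
lemma coordKer_le_stabilizer {D : Set ℕ} (hD : D ⊆ B) {V : Set (Hgrp B)}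
    (hV : MeasurableSet[coordSigma hD] V) :
    coordKer B D ≤ AddAction.stabilizer (Hgrp B) V := fun _ hk ↦
  AddAction.mem_stabilizer_set.2 <|
    Set.ext_iff.1 (coordSigma_le_invariants_add_left hD hk V hV).2

lemma exists_int_forall_cast_eq (h : Hgrp B) (u : Finset B) :
    ∃ n : ℤ, ∀ b ∈ u, (n : ZMod b) = (h : (b : B) → ZMod b) b := by
  obtain ⟨_, ⟨n, rfl⟩, hn⟩ := exists_mem_forall_eq_of_mem_closure h.2 u
  exact ⟨n, hn⟩

lemma exists_int_forall_cast_eq_zero_and_eq_one {A C : Set ℕ}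
    (hcop : ∀ a ∈ A, ∀ c ∈ C, Nat.Coprime a c) (u : Finset B) :
    ∃ e : ℤ, ∀ b ∈ u, ((b : ℕ) ∈ A → (e : ZMod b) = 0) ∧ ((b : ℕ) ∈ C → (e : ZMod b) = 1) := by
  obtain ⟨e, heA, heC⟩ := exists_dvd_and_dvd_one_sub_of_isCoprime
    (ι := B) (κ := B) (s := {b ∈ u | (b : ℕ) ∈ A}) (t := {b ∈ u | (b : ℕ) ∈ C})
    (f := fun b ↦ ((b : ℕ) : ℤ)) (g := fun b ↦ ((b : ℕ) : ℤ)) fun a ha c hc ↦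
      Nat.isCoprime_iff_coprime.2 (hcop a (Finset.mem_filter.1 ha).2 c (Finset.mem_filter.1 hc).2)
  refine ⟨e, fun b hb ↦ ⟨fun hA ↦ ?_, fun hC ↦ ?_⟩⟩
  · exact (ZMod.intCast_zmod_eq_zero_iff_dvd e b).2 (heA b (Finset.mem_filter.2 ⟨hb, hA⟩))
  · simpa using ((ZMod.intCast_eq_intCast_iff_dvd_sub e 1 b).2
      (heC b (Finset.mem_filter.2 ⟨hb, hC⟩)))

variable [∀ b : B, NeZero (b : ℕ)]

lemma exists_Hgrp_forall_mem {F : ∀ b : B, Set (ZMod b)}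
    (hF : ∀ u : Finset B, ∃ n : ℤ, ∀ b ∈ u, (n : ZMod b) ∈ F b) :
    ∃ h : Hgrp B, ∀ b, (h : (b : B) → ZMod b) b ∈ F b := by
  obtain ⟨h, hH, hh⟩ := exists_mem_closure_forall_mem
    (S := (diagEmb B).range) (fun b ↦ isClosed_discrete (F b)) fun u ↦ by
      obtain ⟨n, hn⟩ := hF u
      exact ⟨diagEmb B n, ⟨n, rfl⟩, hn⟩
  exact ⟨⟨h, hH⟩, hh⟩

lemma codisjoint_coordKer {A C : Set ℕ} (hcop : ∀ a ∈ A, ∀ c ∈ C, Nat.Coprime a c) :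
    Codisjoint (coordKer B A) (coordKer B C) := by
  refine codisjoint_iff.2 (eq_top_iff.2 fun h _ ↦ ?_)
  obtain ⟨k, hk⟩ := exists_Hgrp_forall_mem (B := B)
    (F := fun b ↦ {z | ((b : ℕ) ∈ A → z = 0) ∧ ((b : ℕ) ∈ C → z = (h : (b : B) → ZMod b) b)})
    fun u ↦ by
      obtain ⟨n, hn⟩ := exists_int_forall_cast_eq h u
      obtain ⟨e, he⟩ := exists_int_forall_cast_eq_zero_and_eq_one hcop u
      refine ⟨n * e, fun b hb ↦ ⟨fun hA ↦ ?_, fun hC ↦ ?_⟩⟩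
      · rw [Int.cast_mul, (he b hb).1 hA, mul_zero]
      · rw [Int.cast_mul, (he b hb).2 hC, mul_one, hn b hb]
  have hkA : k ∈ coordKer B A := fun b hA ↦ (hk b).1 hA
  have hkC : h - k ∈ coordKer B C := fun b hC ↦ sub_eq_zero.2 ((hk b).2 hC).symm
  simpa using AddSubgroup.add_mem_sup hkA hkC

end Coordinates

section Haar

variable (B : Set ℕ)

instance : SecondCountableTopology (Hgrp B) :=
  have (b : B) : Countable (ZMod b) := ZMod.intCast_surjective.countable
  TopologicalSpace.Subtype.secondCountableTopology _

variable [∀ b : B, NeZero (b : ℕ)]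

instance : (mH B).IsAddHaarMeasure :=
  inferInstanceAs (Measure.addHaarMeasure ⊤).IsAddHaarMeasure

instance : IsProbabilityMeasure (mH B) :=
  ⟨Measure.addHaarMeasure_self (K₀ := ⊤)⟩

end Haar

/-- If `A, C ⊆ B` are coprime to each other, then the σ-algebras generated by the
coordinates in `A` resp. in `C` are independent for the Haar measure `m_H`. -/
theorem haar_coprime_independent (B : Set ℕ) [∀ b : B, NeZero (b : ℕ)]
    (A C : Set ℕ) (hAB : A ⊆ B) (hCB : C ⊆ B)
    (hcop : ∀ a ∈ A, ∀ c ∈ C, Nat.Coprime a c) (V₁ V₂ : Set (Hgrp B))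
    (h1 : MeasurableSet[⨆ a : A,
      MeasurableSpace.comap (fun h : Hgrp B => (h : (b : B) → ZMod b) ⟨a, hAB a.2⟩) ⊤] V₁)
    (h2 : MeasurableSet[⨆ c : C,
      MeasurableSpace.comap (fun h : Hgrp B => (h : (b : B) → ZMod b) ⟨c, hCB c.2⟩) ⊤] V₂) :
    mH B (V₁ ∩ V₂) = mH B V₁ * mH B V₂ := by
  have hST : Codisjoint _ _ := (codisjoint_coordKer hcop).mono
    (coordKer_le_stabilizer hAB h1) (coordKer_le_stabilizer hCB h2)
  simpa using measure_inter_mul_measure_univ_of_codisjoint_stabilizer (mH B)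
    (coordSigma_le hAB V₁ h1) (coordSigma_le hCB V₂ h2) hST
end
end
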